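/- Holt-type system dual to the second Hénon–Heiles system. Let α ≠ 0, β ∈ ℝ, x̃ > 0, and define H(x,y,p_x,p_y) = (1/2)(p_x² + p_y²) + (α²/2)·x·(2x² + y²) + β. The substitution x = (3/2)x̃^{2/3}, p_x = p̃_x·x̃^{1/3}, y = √(2/3)·p̃_y/α, p_y = −√(3/2)·α·ỹ is a canonical transformation (it satisfies {p̃_x,x̃} = {p̃_y,ỹ} = 1 and the vanishing of all other basic brackets with respect to the canonical Poisson bracket in (x̃,ỹ,p̃_x,p̃_y)), and under it x̃^{−2/3}·H = (1/2)(p̃_x² + p̃_y²) + (3α²/4)·x̃^{−2/3}·((9/2)x̃² + ỹ²) + β·x̃^{−2/3}. -/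

import Mathlib

/-- The canonical Poisson bracket of two functions of `(x, y, pₓ, p_y)` on `ℝ⁴`:
`{F,G} = ∂F/∂pₓ·∂G/∂x − ∂F/∂x·∂G/∂pₓ + ∂F/∂p_y·∂G/∂y − ∂F/∂y·∂G/∂p_y`. -/
noncomputable def pb (F G : ℝ → ℝ → ℝ → ℝ → ℝ) (x y px py : ℝ) : ℝ :=
    deriv (fun s => F x y s py) px * deriv (fun s => G s y px py) x
  - deriv (fun s => F s y px py) x * deriv (fun s => G x y s py) px
  + deriv (fun s => F x y px s) py * deriv (fun s => G x s px py) y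
  - deriv (fun s => F x s px py) y * deriv (fun s => G x y px s) py

/-- The physical variables of the second Hénon–Heiles system expressed through
the canonical variables `(x̃, ỹ, p̃ₓ, p̃_y)` of the Holt-type system. -/
noncomputable def X : ℝ → ℝ → ℝ → ℝ → ℝ := fun xt _ _ _ => (3 / 2) * xt ^ ((2 : ℝ) / 3)
noncomputable def PX : ℝ → ℝ → ℝ → ℝ → ℝ := fun xt _ pxt _ => pxt * xt ^ ((1 : ℝ) / 3)
noncomputable def Y (α : ℝ) : ℝ → ℝ → ℝ → ℝ → ℝ :=
  fun _ _ _ pyt => Real.sqrt (2 / 3) * pyt / α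
noncomputable def PY (α : ℝ) : ℝ → ℝ → ℝ → ℝ → ℝ :=
  fun _ yt _ _ => -(Real.sqrt (3 / 2) * α * yt)

/-- The second integrable Hénon–Heiles Hamiltonian. -/
noncomputable def Ham (α β : ℝ) (x y px py : ℝ) : ℝ :=
  (1 / 2) * (px ^ 2 + py ^ 2) + (α ^ 2 / 2) * x * (2 * x ^ 2 + y ^ 2) + β

/-!
With `u = x̃^(1/3)` and `k = √(3/2) α`, the substitution reads `x = (3/2) u²`, `pₓ = p̃ₓ u` and
`y = p̃_y / k`, `p_y = -k ỹ`. It is the product of the cotangent lift of `x̃ ↦ (3/2) x̃^(2/3)`, whose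
derivative is `1 / u`, and of a rescaled exchange of position and momentum, so it is canonical.
Since `k² = (3/2) α²`, the coupling `(α²/2) x y²` becomes the kinetic term `(1/2) u² p̃_y²` and
`(1/2) p_y²` becomes the potential `(3α²/4) ỹ²`; the kinetic energy thus carries the common factor
`u² = x̃^(2/3)`, which the time change removes.
-/

section PoissonBracket

variable (x y px py : ℝ)

theorem pb_antisymm (F G : ℝ → ℝ → ℝ → ℝ → ℝ) :
    pb F G x y px py = -pb G F x y px py := by
  unfold pb
  ring

theorem pb_eq_zero_of_separated (f g : ℝ → ℝ → ℝ) :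
    pb (fun x _ px _ => f x px) (fun _ y _ py => g y py) x y px py = 0 := by
  simp [pb]

theorem pb_momentum_mul_position (m f : ℝ → ℝ) :
    pb (fun x _ px _ => px * m x) (fun x _ _ _ => f x) x y px py = m x * deriv f x := by
  simp [pb]

theorem pb_position_momentum (f g : ℝ → ℝ) :
    pb (fun _ y _ _ => f y) (fun _ _ _ py => g py) x y px py = -(deriv f y * deriv g py) := by
  simp [pb]

theorem pb_rpow_cotangent_lift {x c : ℝ} (hx : 0 < x) (hc : c ≠ 0) :
    pb (fun x _ px _ => px * x ^ (1 - c)) (fun x _ _ _ => x ^ c / c) x y px py = 1 := by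
  have deriv_position : deriv (fun s : ℝ => s ^ c / c) x = x ^ (c - 1) := by
    rw [deriv_div_const, Real.deriv_rpow_const, mul_div_cancel_left₀ _ hc]
  rw [pb_momentum_mul_position x y px py (fun s => s ^ (1 - c)) (fun s => s ^ c / c),
    deriv_position, ← Real.rpow_add hx, sub_add_sub_cancel', sub_self, Real.rpow_zero]

theorem pb_scaled_exchange {k : ℝ} (hk : k ≠ 0) :
    pb (fun _ y _ _ => -(k * y)) (fun _ _ _ py => py / k) x y px py = 1 := by
  rw [pb_position_momentum x y px py (fun s => -(k * s)) (fun s => s / k)]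
  simp [hk]

end PoissonBracket

theorem X_eq_rpow_div : X = fun x _ _ _ => x ^ ((2 : ℝ) / 3) / (2 / 3) := by
  funext x _ _ _
  simp only [X]
  ring

theorem PX_eq_mul_rpow : PX = fun x _ px _ => px * x ^ (1 - (2 : ℝ) / 3) := by
  unfold PX
  norm_num

theorem Y_eq_div (α : ℝ) : Y α = fun _ _ _ py => py / (√(3 / 2) * α) := by
  have sqrt_two_thirds : √(2 / 3 : ℝ) = (√(3 / 2))⁻¹ := by
    rw [← Real.sqrt_inv, inv_div]
  funext _ _ _ py
  rw [Y, sqrt_two_thirds, inv_mul_eq_div, div_div]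

theorem Ham_cube_substitution {α k : ℝ} (hk : k ≠ 0) (hkα : k ^ 2 = 3 / 2 * α ^ 2)
    (β u y px py : ℝ) :
    Ham α β (3 / 2 * u ^ 2) (py / k) (px * u) (-(k * y)) =
      u ^ 2 * (1 / 2 * (px ^ 2 + py ^ 2))
        + 3 * α ^ 2 / 4 * (9 / 2 * (u ^ 3) ^ 2 + y ^ 2) + β := by
  have hα_sq : α ^ 2 = 2 / 3 * k ^ 2 := by linarith
  rw [Ham, hα_sq]
  field_simp
  ring

theorem Ham_comp_substitution {α x : ℝ} (hα : α ≠ 0) (hx : 0 ≤ x) (β y px py : ℝ) :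
    Ham α β (X x y px py) (Y α x y px py) (PX x y px py) (PY α x y px py) =
      x ^ ((2 : ℝ) / 3) * (1 / 2 * (px ^ 2 + py ^ 2))
        + 3 * α ^ 2 / 4 * (9 / 2 * x ^ 2 + y ^ 2) + β := by
  have hk : √(3 / 2) * α ≠ 0 := by positivity
  have hk_sq : (√(3 / 2) * α) ^ 2 = 3 / 2 * α ^ 2 := by
    rw [mul_pow, Real.sq_sqrt (by norm_num)]
  have cbrt_sq : (x ^ ((1 : ℝ) / 3)) ^ 2 = x ^ ((2 : ℝ) / 3) := by
    rw [← Real.rpow_mul_natCast hx]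
    norm_num
  have cbrt_cube : (x ^ ((1 : ℝ) / 3)) ^ 3 = x := by
    rw [← Real.rpow_mul_natCast hx]
    norm_num
  rw [Y_eq_div, X, PX, PY]
  simpa only [cbrt_sq, cbrt_cube] using
    Ham_cube_substitution hk hk_sq β (x ^ ((1 : ℝ) / 3)) y px py

/-- Holt-type system dual to the second Hénon–Heiles system: the substitution is
canonical on `x̃ > 0`, and after the time change (division by `x̃^(2/3)`) the
Hamiltonian takes the Holt-type form. -/
theorem holt_dual_second_henon_heiles (α β : ℝ) (hα : α ≠ 0) :
    (∀ xt yt pxt pyt : ℝ, 0 < xt → pb PX X xt yt pxt pyt = 1) ∧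
    (∀ xt yt pxt pyt : ℝ, 0 < xt → pb (PY α) (Y α) xt yt pxt pyt = 1) ∧
    (∀ xt yt pxt pyt : ℝ, 0 < xt → pb PX (Y α) xt yt pxt pyt = 0) ∧
    (∀ xt yt pxt pyt : ℝ, 0 < xt → pb (PY α) X xt yt pxt pyt = 0) ∧
    (∀ xt yt pxt pyt : ℝ, 0 < xt → pb X (Y α) xt yt pxt pyt = 0) ∧
    (∀ xt yt pxt pyt : ℝ, 0 < xt → pb PX (PY α) xt yt pxt pyt = 0) ∧
    (∀ xt yt pxt pyt : ℝ, 0 < xt →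
      xt ^ (-(2 : ℝ) / 3) *
          Ham α β (X xt yt pxt pyt) (Y α xt yt pxt pyt)
            (PX xt yt pxt pyt) (PY α xt yt pxt pyt) =
        (1 / 2) * (pxt ^ 2 + pyt ^ 2)
          + (3 * α ^ 2 / 4) * xt ^ (-(2 : ℝ) / 3) * ((9 / 2) * xt ^ 2 + yt ^ 2)
          + β * xt ^ (-(2 : ℝ) / 3)) := by
  refine ⟨fun x y px py hx => ?_, fun x y px py _ => ?_, fun x y px py _ => ?_,
    fun x y px py _ => ?_, fun x y px py _ => ?_, fun x y px py _ => ?_, fun x y px py hx => ?_⟩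
  · rw [PX_eq_mul_rpow, X_eq_rpow_div]
    exact pb_rpow_cotangent_lift y px py hx (by norm_num)
  · rw [Y_eq_div]
    exact pb_scaled_exchange x y px py (k := √(3 / 2) * α) (by positivity)
  · exact pb_eq_zero_of_separated x y px py (fun x px => PX x 0 px 0) (fun y py => Y α 0 y 0 py)
  · rw [pb_antisymm, neg_eq_zero]
    exact pb_eq_zero_of_separated x y px py (fun x px => X x 0 px 0) (fun y py => PY α 0 y 0 py)
  · exact pb_eq_zero_of_separated x y px py (fun x px => X x 0 px 0) (fun y py => Y α 0 y 0 py)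
  · exact pb_eq_zero_of_separated x y px py (fun x px => PX x 0 px 0) (fun y py => PY α 0 y 0 py)
  · have time_change : x ^ (-(2 : ℝ) / 3) * x ^ ((2 : ℝ) / 3) = 1 := by
      rw [← Real.rpow_add hx, neg_div, neg_add_cancel, Real.rpow_zero]
    rw [Ham_comp_substitution hα hx.le]
    linear_combination (1 / 2 * (px ^ 2 + py ^ 2)) * time_change
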